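/- arXiv:2604.20525 — 3 statements merged into one kernel-verified Lean document; each statement's English description precedes it below -/
import Mathlib

section
/- Let h > 0 and let z ∈ ℂ with Re z > 0. Let T_z be the integral operator on L²(ℝ) with kernel K_z(y,y′) = (1/(2πh)) ∫_ℝ e^{i(y−y′)η/h} e^{−z(((y+y′)/2)² + η²)} dη. Then for every k ∈ ℕ₀, T_z φ_k = ((1 − hz)^k/(1 + hz)^{k+1}) φ_k, where φ_k is the rescaled Hermite function. -/
/-!
STATEMENT 10: Mehler's formula.  For h > 0 and z ∈ ℂ with Re z > 0, the
integral operator T_z with kernel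
K_z(y,y′) = (1/(2πh)) ∫ e^{i(y−y′)η/h} e^{−z(((y+y′)/2)²+η²)} dη satisfies
T_z φ_k = ((1−hz)^k/(1+hz)^{k+1}) φ_k for every k ∈ ℕ₀, where φ_k is the
rescaled Hermite function.
-/

open MeasureTheory Complex Real

noncomputable section

/-- The Hermite function `ψ_k(x) = (π^{−1/4}/√(2^k k!)) (d/dx − x)^k e^{−x²/2}`. -/
def hermiteFun (k : ℕ) : ℝ → ℝ := fun x =>
  (Real.pi ^ (-(1/4 : ℝ)) / Real.sqrt ((2 : ℝ) ^ k * (Nat.factorial k))) *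
    ((fun f : ℝ → ℝ => fun t => deriv f t - t * f t)^[k]
      (fun t => Real.exp (-t ^ 2 / 2))) x

/-- The semiclassically rescaled Hermite function `φ_k(y) = h^{−1/4} ψ_k(h^{−1/2} y)`. -/
def scaledHermite (h : ℝ) (k : ℕ) (y : ℝ) : ℝ :=
  h ^ (-(1/4 : ℝ)) * hermiteFun k (h ^ (-(1/2 : ℝ)) * y)

/-- The kernel of the semiclassical Weyl quantization of the Gaussian symbol
`e^{−z(y²+η²)}`. -/
def gaussKernel (h : ℝ) (z : ℂ) (y y' : ℝ) : ℂ :=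
  ((1 / (2 * Real.pi * h) : ℝ) : ℂ) *
    ∫ η : ℝ, Complex.exp (Complex.I * (((y - y') * η / h : ℝ) : ℂ)) *
      Complex.exp (-z * ((((y + y') / 2) ^ 2 + η ^ 2 : ℝ) : ℂ))

/-- unnormalised Hermite functions -/
def hF (k : ℕ) : ℝ → ℝ :=
  ((fun f : ℝ → ℝ => fun t => deriv f t - t * f t)^[k]
      (fun t => Real.exp (-t ^ 2 / 2)))

lemma hF_succ (k : ℕ) (x : ℝ) : hF (k+1) x = deriv (hF k) x - x * hF k x := by
  simp only [hF, Function.iterate_succ_apply']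

lemma hasDerivAt_gauss (x : ℝ) :
    HasDerivAt (fun t : ℝ => Real.exp (-t ^ 2 / 2)) (-x * Real.exp (-x ^ 2 / 2)) x := by
  have h1 : HasDerivAt (fun t : ℝ => -t ^ 2 / 2) (-x) x := by
    have := ((hasDerivAt_pow 2 x).fun_neg.div_const 2)
    exact this.congr_deriv (by push_cast; ring)
  exact h1.exp.congr_deriv (by ring)

lemma hF_poly (k : ℕ) : ∃ P : Polynomial ℝ, hF k = fun x => P.eval x * Real.exp (-x ^ 2 / 2) := by
  induction k with
  | zero => exact ⟨1, by ext x; simp [hF]⟩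
  | succ k ih =>
    obtain ⟨P, hP⟩ := ih
    refine ⟨Polynomial.derivative P - 2 * Polynomial.X * P, ?_⟩
    ext x
    rw [hF_succ, hP, ((P.hasDerivAt x).fun_mul (hasDerivAt_gauss x)).deriv]
    simp
    ring

lemma hF_diff (k : ℕ) (x : ℝ) : HasDerivAt (hF k) (hF (k+1) x + x * hF k x) x := by
  have : DifferentiableAt ℝ (hF k) x := by
    obtain ⟨P, hP⟩ := hF_poly k
    rw [hP]
    exact ((P.hasDerivAt x).fun_mul (hasDerivAt_gauss x)).differentiableAt
  rw [hF_succ]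
  exact this.hasDerivAt.congr_deriv (by ring)

lemma poly_integrable (P : Polynomial ℝ) :
    Integrable (fun x : ℝ => P.eval x * Real.exp (-x ^ 2 / 2)) := by
  induction P using Polynomial.induction_on' with
  | add p q hp hq =>
    have := hp.add hq
    refine this.congr (Filter.Eventually.of_forall fun x => ?_)
    simp [add_mul]
  | monomial n c =>
    have := (integrable_rpow_mul_exp_neg_mul_sq (b := 1/2) (by norm_num) (s := n)
      (by have : (0:ℝ) ≤ n := n.cast_nonneg
          linarith)).const_mul c
    refine this.congr (Filter.Eventually.of_forall fun x => ?_)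
    simp only [Real.rpow_natCast, Polynomial.eval_monomial]
    rw [mul_assoc]
    congr 3
    ring

lemma hF_integrable (k : ℕ) : Integrable (hF k) := by
  obtain ⟨P, hP⟩ := hF_poly k
  rw [hP]
  exact poly_integrable P

lemma hF_rec (k : ℕ) : ∀ x, hF (k+1) x = -2 * x * hF k x - 2 * k * hF (k-1) x := by
  induction k with
  | zero =>
    intro x
    have h0 : hF 0 = (fun t : ℝ => Real.exp (-t ^ 2 / 2)) := rfl
    rw [hF_succ, h0, (hasDerivAt_gauss x).deriv]
    simp; ring
  | succ k ih =>
    intro x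
    have e : hF (k+1) = fun x => -2 * x * hF k x - 2 * k * hF (k-1) x := funext ih
    have d : HasDerivAt (fun x => -2 * x * hF k x - 2 * k * hF (k-1) x)
       ((-2 * 1) * hF k x + -2 * x * (hF (k+1) x + x * hF k x)
         - 2 * k * (hF (k-1+1) x + x * hF (k-1) x)) x :=
      (((hasDerivAt_id x).const_mul (-2)).mul (hF_diff k x)).sub ((hF_diff (k-1) x).const_mul _)
    rw [hF_succ, e, d.deriv]
    rw [show k + 1 - 1 = k from rfl, ← e]
    have := ih x
    rcases k with _ | k
    · simp only [Nat.cast_zero]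
      rw [this]; push_cast; ring
    · push_cast at *
      rw [this]; ring

/-- rescaled kernel -/
def GG (a : ℂ) (v u : ℝ) : ℂ := Complex.exp (-a * (v + u)^2 / 4 - (v - u)^2 / (4 * a))

lemma GG_norm (a : ℂ) (ha : 0 < a.re) (v u : ℝ) : ‖GG a v u‖ ≤ 1 := by
  have hi : 0 < (a⁻¹).re := by
    rw [Complex.inv_re]; exact div_pos ha (Complex.normSq_pos.2 (by rintro rfl; simp at ha))
  rw [GG, Complex.norm_exp]
  have : -a * (v + u)^2 / 4 - (v - u)^2 / (4 * a)
      = ((-((v+u)^2/4) : ℝ) : ℂ) * a + ((-((v-u)^2/4) : ℝ) : ℂ) * a⁻¹ := by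
    push_cast; ring
  rw [this, Complex.add_re, Complex.re_ofReal_mul, Complex.re_ofReal_mul]
  rw [Real.exp_le_one_iff]
  nlinarith [mul_nonneg (sq_nonneg (v+u)) ha.le, mul_nonneg (sq_nonneg (v-u)) hi.le]

lemma GG_int (a : ℂ) (ha : 0 < a.re) (v : ℝ) (k : ℕ) :
    Integrable (fun u : ℝ => GG a v u * (hF k u : ℂ)) := by
  refine Integrable.bdd_mul (c := 1) (hF_integrable k).ofReal ?_ ?_
  · apply Continuous.aestronglyMeasurable
    unfold GG
    fun_prop
  · exact Filter.Eventually.of_forall (GG_norm a ha v)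

lemma GG_deriv (a : ℂ) (v u : ℝ) : HasDerivAt (fun u : ℝ => GG a v u)
    ((-a * (v + u) / 2 + (v - u) / (2 * a)) * GG a v u) u := by
  have h1 : HasDerivAt (fun u : ℝ => (v : ℂ) + u) 1 u := (Complex.ofRealCLM.hasDerivAt).const_add _
  have h2 : HasDerivAt (fun u : ℝ => (v : ℂ) - u) (-1) u := (Complex.ofRealCLM.hasDerivAt).const_sub _
  have := ((((h1.fun_pow 2).const_mul (-a)).div_const 4).fun_sub
    ((h2.fun_pow 2).div_const (4*a))).cexp
  refine this.congr_deriv ?_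
  simp only [GG]
  push_cast
  ring

lemma GG_rec (a : ℂ) (ha : 0 < a.re) (v : ℝ) (k : ℕ) :
    (a+1)^2 * ∫ u : ℝ, GG a v u * (hF (k+1) u : ℂ) =
      2 * (a^2 - 1) * v * (∫ u : ℝ, GG a v u * (hF k u : ℂ))
       - 2 * (a-1)^2 * k * ∫ u : ℝ, GG a v u * (hF (k-1) u : ℂ) := by
  have ha0 : a ≠ 0 := by rintro rfl; simp at ha
  have hd : ∀ u : ℝ, HasDerivAt (fun u : ℝ => (4 * a) * (GG a v u * (hF k u : ℂ)))
      ((a+1)^2 * (GG a v u * (hF (k+1) u : ℂ)) - 2 * (a^2 - 1) * v * (GG a v u * (hF k u : ℂ))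
        + 2 * (a-1)^2 * k * (GG a v u * (hF (k-1) u : ℂ))) u := by
    intro u
    have := ((GG_deriv a v u).fun_mul (hF_diff k u).ofReal_comp).const_mul (4*a)
    refine this.congr_deriv ?_
    have r := hF_rec k u
    rw [r]
    push_cast
    field_simp
    ring
  have i1 := (GG_int a ha v (k+1)).const_mul ((a+1)^2)
  have i2 := (GG_int a ha v k).const_mul (2 * (a^2 - 1) * v)
  have i3 := (GG_int a ha v (k-1)).const_mul (2 * (a-1)^2 * k)
  have := integral_eq_zero_of_hasDerivAt_of_integrable hd ((i1.sub i2).add i3)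
    ((GG_int a ha v k).const_mul _)
  rw [integral_add (by exact i1.sub i2) i3, integral_sub i1 i2, integral_const_mul, integral_const_mul,
    integral_const_mul] at this
  linear_combination this

lemma GG_main (a : ℂ) (ha : 0 < a.re) (v : ℝ) (k : ℕ) :
    ∫ u : ℝ, GG a v u * (hF k u : ℂ) = 
     ((1-a)/(1+a))^k * ((π / ((a+1)^2/(4*a))) ^ (1/2 : ℂ)) * hF k v := by
  have ha0 : a ≠ 0 := by rintro rfl; simp at ha
  have ha1 : 1 + a ≠ 0 := by
    intro h
    have := congrArg Complex.re h
    simp at this; linarith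
  have ha2 : a + 1 ≠ 0 := by rwa [add_comm]
  induction k using Nat.strong_induction_on with
  | _ k ih =>
  rcases k with _ | k
  · have hi : 0 < (a⁻¹).re := by
      rw [Complex.inv_re]; exact div_pos ha (Complex.normSq_pos.2 ha0)
    have hb : (-((a+1)^2/(4*a))).re < 0 := by
      have : -((a+1)^2/(4*a)) = ((-(1/4) : ℝ) : ℂ) * (a + a⁻¹ + (2:ℝ)) := by
        push_cast; field_simp; ring
      rw [this, Complex.re_ofReal_mul]
      simp only [Complex.add_re, Complex.ofReal_re]
      linarith
    have := integral_cexp_quadratic hb ((1/a - a) * v/2) (-(a + 1/a) * v^2/4)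
    have e : ∀ u : ℝ, GG a v u * (hF 0 u : ℂ) = Complex.exp (-((a+1)^2/(4*a)) * u^2
       + ((1/a - a) * v/2) * u + (-(a + 1/a) * v^2/4)) := by
      intro u
      simp only [GG, hF, Function.iterate_zero, id]
      rw [Complex.ofReal_exp, ← Complex.exp_add]
      congr 1
      push_cast
      field_simp
      ring
    simp_rw [e]
    rw [this]
    simp only [hF, Function.iterate_zero, id, neg_neg, pow_zero, one_mul]
    rw [Complex.ofReal_exp]
    congr 2
    push_cast
    field_simp
    ring
  · have r := GG_rec a ha v k
    rw [ih k (by omega)] at r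
    apply mul_left_cancel₀ (pow_ne_zero 2 ha2)
    rw [r, hF_rec k v]
    rcases k with _ | k
    · simp
      field_simp
      ring
    · rw [show k + 1 - 1 = k from rfl, ih k (by omega)]
      push_cast
      generalize (π / ((a+1)^2/(4*a))) ^ (1/2 : ℂ) = C
      have : (a + 1) = (1 + a) := by ring
      rw [this]
      simp only [pow_succ, pow_zero]
      field_simp
      ring

lemma sqrt_sq (w : ℂ) : (w ^ (1/2 : ℂ))^2 = w := by
  have := Complex.cpow_nat_inv_pow w (n := 2) (by norm_num)
  simp

lemma sqrt_re (w : ℂ) (hw : 0 < w.re) : 0 < (w ^ (1/2 : ℂ)).re := by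
  have h0 : w ≠ 0 := by rintro rfl; simp at hw
  have h1 := Complex.abs_arg_lt_pi_div_two_iff.2 (Or.inl hw)
  rw [abs_lt] at h1
  rw [Complex.cpow_def_of_ne_zero h0, Complex.exp_re]
  apply mul_pos (Real.exp_pos _)
  apply Real.cos_pos_of_mem_Ioo
  have : (Complex.log w * (1/2 : ℂ)).im = w.arg / 2 := by
    rw [show (1/2 : ℂ) = ((1/2 : ℝ) : ℂ) by push_cast; rfl, Complex.im_mul_ofReal, Complex.log_im]; ring
  rw [this]
  constructor <;> linarith [Real.pi_pos]

lemma inv_re_pos {a : ℂ} (ha : 0 < a.re) : 0 < (a⁻¹).re := by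
  rw [Complex.inv_re]; exact div_pos ha (Complex.normSq_pos.2 (by rintro rfl; simp at ha))

lemma sqrt_unique (w t : ℂ) (hw : 0 < w.re) (ht : 0 < t.re) (h : t^2 = w) : w ^ (1/2 : ℂ) = t := by
  have h1 := sqrt_sq w
  rw [← h] at h1
  rcases sq_eq_sq_iff_eq_or_eq_neg.1 h1 with h2 | h2
  · rw [← h, h2]
  · have := sqrt_re w hw
    rw [← h, h2, Complex.neg_re] at this
    linarith

lemma const_eq (h : ℝ) (hh : 0 < h) (z : ℂ) (hz : 0 < z.re) :
   (π / z) ^ (1/2 : ℂ) * (π / (((h*z)+1)^2/(4*(h*z)))) ^ (1/2 : ℂ) * (√h : ℝ) = 2 * π * h / (1 + h * z) := by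
  have hz0 : z ≠ 0 := by rintro rfl; simp at hz
  have hp := Real.pi_pos
  have hpc : (π : ℂ) ≠ 0 := by exact_mod_cast hp.ne'
  have hs : 0 < √h := Real.sqrt_pos.2 hh
  have hsc : ((√h : ℝ) : ℂ) ≠ 0 := by exact_mod_cast hs.ne'
  have hhs : (h : ℂ) = ((√h : ℝ) : ℂ)^2 := by
    rw [← Complex.ofReal_pow, Real.sq_sqrt hh.le]
  have ha : 0 < ((h:ℂ) * z).re := by rw [Complex.re_ofReal_mul]; positivity
  have ha1 : (h:ℂ) * z + 1 ≠ 0 := by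
    intro e
    have := congrArg Complex.re e
    rw [Complex.add_re] at this
    simp at this ha; linarith
  have ha0 : (h:ℂ) * z ≠ 0 := by intro e; rw [e] at ha; simp at ha
  have hpz : 0 < (π / z : ℂ).re := by
    rw [div_eq_mul_inv, Complex.re_ofReal_mul]; exact mul_pos hp (inv_re_pos hz)
  set s := (π / z : ℂ) ^ (1/2 : ℂ) with hs_def
  have s2 : s^2 = π / z := sqrt_sq _
  have sre : 0 < s.re := sqrt_re _ hpz
  have s0 : s ≠ 0 := by intro e; rw [e] at sre; simp at sre
  have hzs : z = π / s^2 := by rw [s2]; field_simp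
  have hden : 0 < (((1/(2 * π * √h) : ℝ) : ℂ) * s + ((√h/2 : ℝ):ℂ) * s⁻¹).re := by
    rw [Complex.add_re, Complex.re_ofReal_mul, Complex.re_ofReal_mul]
    have := inv_re_pos sre
    positivity
  have key := sqrt_unique (π / (((h*z)+1)^2/(4*(h*z))))
    (((1/(2 * π * √h) : ℝ) : ℂ) * s + ((√h/2 : ℝ):ℂ) * s⁻¹)⁻¹ ?_ (inv_re_pos hden) ?_
  · rw [key]
    have e1 : (((1/(2 * π * √h) : ℝ) : ℂ) * s + ((√h/2 : ℝ):ℂ) * s⁻¹) 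
       = (h * z + 1) * s / (2 * π * (√h : ℝ)) := by
      rw [hzs, hhs]; push_cast; field_simp; ring
    rw [e1, add_comm 1]
    conv_rhs => rw [show (2 * π * h : ℂ) = 2 * π * ((√h : ℝ) : ℂ)^2 by rw [← hhs]]
    field_simp
  · have : (π / (((h*z)+1)^2/(4*(h*z))) : ℂ) = ((4 * π : ℝ) : ℂ) * (h * z + (h*z)⁻¹ + (2:ℝ))⁻¹ := by
      have e2 : (h * z + (h*z)⁻¹ + (2:ℝ) : ℂ) = (h*z+1)^2/(h*z) := by
        rw [eq_div_iff ha0, add_mul, add_mul, inv_mul_cancel₀ ha0]; push_cast; ring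
      rw [e2]; push_cast; field_simp
    rw [this, Complex.re_ofReal_mul]
    refine mul_pos (by positivity) (inv_re_pos ?_)
    rw [Complex.add_re, Complex.add_re, Complex.ofReal_re]
    linarith [inv_re_pos ha]
  · have e1 : (((1/(2 * π * √h) : ℝ) : ℂ) * s + ((√h/2 : ℝ):ℂ) * s⁻¹) 
       = (h * z + 1) * s / (2 * π * (√h : ℝ)) := by
      rw [hzs, hhs]; push_cast; field_simp; ring
    rw [e1, inv_pow, div_pow, mul_pow, mul_pow, s2, mul_pow, ← hhs]
    field_simp
    ring

lemma kernel_eq (h : ℝ) (hh : 0 < h) (z : ℂ) (hz : 0 < z.re) (v u : ℝ) :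
    gaussKernel h z (√h * v) (√h * u) = 1/(2*π*h) * (π/z)^(1/2 : ℂ) * GG (h*z) v u := by
  have hz0 : z ≠ 0 := by rintro rfl; simp at hz
  have hs : 0 < √h := Real.sqrt_pos.2 hh
  have hsc : ((√h : ℝ) : ℂ) ≠ 0 := by exact_mod_cast hs.ne'
  have hhs : (h : ℂ) = ((√h : ℝ) : ℂ)^2 := by
    rw [← Complex.ofReal_pow, Real.sq_sqrt hh.le]
  have hb : (-z).re < 0 := by simpa using hz
  have := integral_cexp_quadratic hb (I * (v-u) / (√h : ℝ)) (-z * h * (v+u)^2/4)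
  unfold gaussKernel
  have e : ∀ η : ℝ, Complex.exp (Complex.I * (((√h * v - √h * u) * η / h : ℝ) : ℂ)) *
      Complex.exp (-z * ((((√h * v + √h * u) / 2) ^ 2 + η ^ 2 : ℝ) : ℂ)) =
      Complex.exp (-z * η^2 + (I * (v-u) / (√h : ℝ)) * η + (-z * h * (v+u)^2/4)) := by
    intro η
    rw [← Complex.exp_add]
    congr 1
    push_cast
    rw [hhs]
    field_simp
    ring
  simp_rw [e]
  rw [this, neg_neg, GG]
  push_cast
  rw [← mul_assoc]
  congr 2
  rw [div_pow, mul_pow, I_sq, ← hhs]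
  have hc : (h : ℂ) ≠ 0 := by exact_mod_cast hh.ne'
  field_simp

theorem mehler_eigenfunction
    (h : ℝ) (hh : 0 < h) (z : ℂ) (hz : 0 < z.re) (k : ℕ) (y : ℝ) :
    ∫ y' : ℝ, gaussKernel h z y y' * ((scaledHermite h k y' : ℝ) : ℂ)
      = ((1 - (h : ℂ) * z) ^ k / (1 + (h : ℂ) * z) ^ (k + 1)) *
          ((scaledHermite h k y : ℝ) : ℂ) := by
  have hs : 0 < √h := Real.sqrt_pos.2 hh
  have hc : (h : ℂ) ≠ 0 := by exact_mod_cast hh.ne'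
  have hpc : (π : ℂ) ≠ 0 := by exact_mod_cast Real.pi_pos.ne'
  have ha : 0 < ((h:ℂ) * z).re := by rw [Complex.re_ofReal_mul]; positivity
  have ha1 : 1 + (h:ℂ) * z ≠ 0 := by
    intro e
    have := congrArg Complex.re e
    rw [Complex.add_re] at this
    simp at this ha; linarith
  have hr : h ^ (-(1/2 : ℝ)) = (√h)⁻¹ := by
    rw [Real.rpow_neg hh.le, Real.sqrt_eq_rpow]
  obtain ⟨v, rfl⟩ : ∃ v, y = √h * v := ⟨(√h)⁻¹ * y, by field_simp⟩
  obtain ⟨c, hcS⟩ : ∃ c : ℝ, ∀ u, scaledHermite h k (√h * u) = c * hF k u := by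
    refine ⟨h ^ (-(1/4 : ℝ)) * (Real.pi ^ (-(1/4 : ℝ)) / Real.sqrt ((2 : ℝ) ^ k * (Nat.factorial k))), ?_⟩
    intro u
    rw [scaledHermite, hr, inv_mul_cancel_left₀ hs.ne', hermiteFun, mul_assoc]
    rfl
  have hI := Measure.integral_comp_mul_left
    (fun y' : ℝ => gaussKernel h z (√h * v) y' * ((scaledHermite h k y' : ℝ) : ℂ)) (√h)
  have hI2 : ∫ y' : ℝ, gaussKernel h z (√h * v) y' * ((scaledHermite h k y' : ℝ) : ℂ)
     = (√h : ℝ) * ∫ u : ℝ, gaussKernel h z (√h * v) (√h * u) * ((scaledHermite h k (√h * u) : ℝ) : ℂ) := by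
    rw [hI, abs_of_pos (inv_pos.2 hs), Complex.real_smul, ← mul_assoc, ← Complex.ofReal_mul,
      mul_inv_cancel₀ hs.ne']
    simp
  rw [hI2]
  have e : ∀ u : ℝ, gaussKernel h z (√h * v) (√h * u) * ((scaledHermite h k (√h * u) : ℝ) : ℂ)
     = (1/(2*π*h) * (π/z)^(1/2 : ℂ) * c) * (GG (h*z) v u * (hF k u : ℂ)) := by
    intro u
    rw [kernel_eq h hh z hz, hcS]; push_cast; ring
  simp_rw [e]
  rw [integral_const_mul, GG_main _ ha, hcS]
  have ce := const_eq h hh z hz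
  have : ∀ A B S : ℂ, A * B * S = 2 * π * h / (1 + h * z) → 
    S * (1 / (2 * π * h) * A * c * (((1 - h*z)/(1+h*z))^k * B * hF k v)) =
     (1 - (h : ℂ) * z) ^ k / (1 + (h : ℂ) * z) ^ (k + 1) * ((c * hF k v : ℝ) : ℂ) := by
    intro A B S hABS
    have : S * (1 / (2 * π * h) * A * c * (((1 - h*z)/(1+h*z))^k * B * hF k v)) =
      (A * B * S) * (1 / (2 * π * h) * c * (((1 - h*z)/(1+h*z))^k * hF k v)) := by ring
    rw [this, hABS, div_pow, pow_succ]
    push_cast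
    field_simp
  exact this _ _ _ ce
end
end

section
/- Let h > 0 and c > 0. Let T_c be the integral operator on L²(ℝ) with kernel (1/(2πh)) ∫_ℝ e^{i(y−y′)η/h} e^{−c(m² + η²)} dη, where m = (y+y′)/2, and let S_c be the integral operator with kernel (1/(2πh)) ∫_ℝ e^{i(y−y′)η/h} (m² + η²) e^{−c(m² + η²)} dη. Then for every Schwartz function u : ℝ → ℂ and every y ∈ ℝ, −h² (T_c u)″(y) + y² (T_c u)(y) = (1 − h²c²)(S_c u)(y) + h² c (T_c u)(y). -/
open MeasureTheory Complex Real

noncomputable section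

/-- Kernel of the semiclassical Weyl quantization of `e^{−c(y²+η²)}`. -/
def gaussKernelT (h c : ℝ) (y y' : ℝ) : ℂ :=
  ((1 / (2 * Real.pi * h) : ℝ) : ℂ) *
    ∫ η : ℝ, Complex.exp (Complex.I * (((y - y') * η / h : ℝ) : ℂ)) *
      ((Real.exp (-c * (((y + y') / 2) ^ 2 + η ^ 2)) : ℝ) : ℂ)

/-- Kernel of the semiclassical Weyl quantization of `(y²+η²) e^{−c(y²+η²)}`. -/
def gaussKernelS (h c : ℝ) (y y' : ℝ) : ℂ :=
  ((1 / (2 * Real.pi * h) : ℝ) : ℂ) *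
    ∫ η : ℝ, Complex.exp (Complex.I * (((y - y') * η / h : ℝ) : ℂ)) *
      (((((y + y') / 2) ^ 2 + η ^ 2) * Real.exp (-c * (((y + y') / 2) ^ 2 + η ^ 2)) : ℝ) : ℂ)

/-- The operator `T_c` applied to a function. -/
def applyT (h c : ℝ) (u : ℝ → ℂ) : ℝ → ℂ :=
  fun y => ∫ y' : ℝ, gaussKernelT h c y y' * u y'

/-- The operator `S_c` applied to a function. -/
def applyS (h c : ℝ) (u : ℝ → ℂ) : ℝ → ℂ :=
  fun y => ∫ y' : ℝ, gaussKernelS h c y y' * u y'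

lemma aux_int (c : ℝ) (hc : 0 < c) (β : ℝ) (n : ℕ) :
    Integrable (fun η : ℝ => (η : ℂ) ^ n * cexp (-c * η ^ 2 + I * β * η)) := by
  have h1 : Integrable (fun η : ℝ => η ^ n * Real.exp (-c * η ^ 2)) := by
    have := integrable_rpow_mul_exp_neg_mul_sq hc (s := (n : ℝ))
      (by have : (0:ℝ) ≤ n := n.cast_nonneg
          linarith)
    simpa using this
  refine h1.mono (by fun_prop) (Filter.Eventually.of_forall fun η => ?_)
  rw [norm_mul, norm_mul, Complex.norm_exp, norm_pow, norm_pow, Complex.norm_real]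
  have : (-(c:ℂ) * η ^ 2 + I * β * η).re = -c * η ^ 2 := by
    have : (-(c:ℂ) * η ^ 2 + I * β * η) = ((-c * η ^ 2 : ℝ) : ℂ) + ((β * η : ℝ) : ℂ) * I := by
      push_cast; ring
    rw [this]
    simp only [add_re, ofReal_re, re_ofReal_mul, I_re]; ring
  rw [this, Real.norm_of_nonneg (Real.exp_pos _).le]

lemma aux_moment (c : ℝ) (hc : 0 < c) (β : ℝ) :
    ∫ η : ℝ, (η : ℂ) ^ 2 * cexp (-c * η ^ 2 + I * β * η) =
      (1 / (2 * c) - β ^ 2 / (4 * c ^ 2) : ℂ) * ∫ η : ℝ, cexp (-c * η ^ 2 + I * β * η) := by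
  have hc' : (c : ℂ) ≠ 0 := by exact_mod_cast hc.ne'
  have i0 : Integrable (fun η : ℝ => cexp (-c * η ^ 2 + I * β * η)) := by
    simpa using aux_int c hc β 0
  have i1 : Integrable (fun η : ℝ => (η : ℂ) * cexp (-c * η ^ 2 + I * β * η)) := by
    simpa using aux_int c hc β 1
  have i2 := aux_int c hc β 2
  have key := integral_eq_zero_of_hasDerivAt_of_integrable
    (f := fun η : ℝ => (η : ℂ) * cexp (-c * η ^ 2 + I * β * η) +
      (I * β / (2 * c)) * cexp (-c * η ^ 2 + I * β * η))
    (f' := fun η : ℝ => (1 - β ^ 2 / (2 * c) : ℂ) * cexp (-c * η ^ 2 + I * β * η) -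
      2 * c * ((η : ℂ) ^ 2 * cexp (-c * η ^ 2 + I * β * η)))
    (fun η => by
      have hid : HasDerivAt (fun η : ℝ => (η : ℂ)) 1 η := Complex.ofRealCLM.hasDerivAt
      have he : HasDerivAt (fun η : ℝ => cexp (-c * (η:ℂ) ^ 2 + I * β * η)) _ η :=
        (((hid.pow 2).const_mul (-(c:ℂ))).add (hid.const_mul (I * β))).cexp
      have := (hid.mul he).add (he.const_mul (I * β / (2 * c)))
      refine this.congr_deriv ?_
      simp only [Pi.pow_apply, Pi.add_apply]
      field_simp
      ring_nf
      simp only [I_sq]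
      ring)
    ((i0.const_mul _).sub (i2.const_mul _))
    (i1.add (i0.const_mul _))
  rw [integral_sub (i0.const_mul _) (i2.const_mul _), integral_const_mul, integral_const_mul] at key
  generalize (∫ η : ℝ, (η : ℂ) ^ 2 * cexp (-c * η ^ 2 + I * β * η)) = X at key ⊢
  generalize (∫ η : ℝ, cexp (-c * η ^ 2 + I * β * η)) = Y at key ⊢
  have : X = (1 / (2 * c)) * (2 * c * X) := by field_simp
  rw [this, ← sub_eq_zero.mp key]
  field_simp
  ring

/-- Gaussian profile. -/
def EE (c k : ℝ) (y y' : ℝ) : ℝ := Real.exp (-(c * ((y + y') / 2) ^ 2 + k * (y - y') ^ 2))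
def E1 (c k : ℝ) (y y' : ℝ) : ℝ := (-(c * ((y + y') / 2) + 2 * k * (y - y'))) * EE c k y y'
def E2 (c k : ℝ) (y y' : ℝ) : ℝ :=
  ((c * ((y + y') / 2) + 2 * k * (y - y')) ^ 2 - (c / 2 + 2 * k)) * EE c k y y'

lemma EE_deriv (c k y y' : ℝ) : HasDerivAt (fun y => EE c k y y') (E1 c k y y') y := by
  have a : HasDerivAt (fun y : ℝ => (y + y') / 2) (1 / 2) y :=
    ((hasDerivAt_id y).add_const y').div_const 2
  have b : HasDerivAt (fun y : ℝ => y - y') 1 y := (hasDerivAt_id y).sub_const y'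
  have := (((a.pow 2).const_mul c).add ((b.pow 2).const_mul k)).neg.exp
  refine this.congr_deriv ?_
  simp only [E1, EE, Pi.pow_apply, Pi.add_apply, Pi.neg_apply]
  push_cast
  ring

lemma E1_deriv (c k y y' : ℝ) : HasDerivAt (fun y => E1 c k y y') (E2 c k y y') y := by
  have a : HasDerivAt (fun y : ℝ => (y + y') / 2) (1 / 2) y :=
    ((hasDerivAt_id y).add_const y').div_const 2
  have b : HasDerivAt (fun y : ℝ => y - y') 1 y := (hasDerivAt_id y).sub_const y'
  have := (((a.const_mul c).add (b.const_mul (2 * k))).neg).mul (EE_deriv c k y y')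
  refine this.congr_deriv ?_
  simp only [E1, E2, Pi.add_apply, Pi.neg_apply]
  ring

lemma EE_cont (c k y : ℝ) : Continuous (EE c k y) := by unfold EE; fun_prop
lemma E1_cont (c k y : ℝ) : Continuous (E1 c k y) := by unfold E1 EE; fun_prop
lemma E2_cont (c k y : ℝ) : Continuous (E2 c k y) := by unfold E2 EE; fun_prop

lemma EE_pos (c k y y' : ℝ) : 0 < EE c k y y' := Real.exp_pos _

lemma EE_le (c k : ℝ) (hc : 0 < c) (hk : 0 < k) (y y' : ℝ) : EE c k y y' ≤ 1 := by
  unfold EE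
  rw [Real.exp_le_one_iff]
  have : 0 ≤ c * ((y + y') / 2) ^ 2 + k * (y - y') ^ 2 := by positivity
  linarith

lemma sq_bound (c k : ℝ) (hc : 0 < c) (hk : 0 < k) (y y' : ℝ) :
    (c * ((y + y') / 2) + 2 * k * (y - y')) ^ 2 * EE c k y y' ≤ 2 * c + 8 * k := by
  set m := (y + y') / 2 with hm
  set d := y - y' with hd
  have h1 : (c * m ^ 2 + k * d ^ 2) * EE c k y y' ≤ 1 := by
    unfold EE
    rw [Real.exp_neg, ← div_eq_mul_inv, div_le_one (Real.exp_pos _)]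
    have := Real.add_one_le_exp (c * m ^ 2 + k * d ^ 2)
    linarith
  have h2 : (c * m + 2 * k * d) ^ 2 ≤ (2 * c + 8 * k) * (c * m ^ 2 + k * d ^ 2) := by
    have e1 : 0 ≤ c * k * d ^ 2 := by positivity
    have e2 : 0 ≤ c * k * m ^ 2 := by positivity
    nlinarith [sq_nonneg (c * m - 2 * k * d)]
  calc _ ≤ (2 * c + 8 * k) * (c * m ^ 2 + k * d ^ 2) * EE c k y y' :=
        mul_le_mul_of_nonneg_right h2 (EE_pos _ _ _ _).le
    _ = (2 * c + 8 * k) * ((c * m ^ 2 + k * d ^ 2) * EE c k y y') := by ring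
    _ ≤ (2 * c + 8 * k) * 1 := by gcongr
    _ = _ := by ring

lemma E1_bound (c k : ℝ) (hc : 0 < c) (hk : 0 < k) (y y' : ℝ) :
    |E1 c k y y'| ≤ 2 * c + 8 * k + 1 := by
  have h1 := sq_bound c k hc hk y y'
  have h2 := EE_le c k hc hk y y'
  have h3 := EE_pos c k y y'
  unfold E1
  set p := c * ((y + y') / 2) + 2 * k * (y - y')
  rw [abs_mul, abs_neg, abs_of_pos h3]
  have : |p| ≤ p ^ 2 + 1 := by
    rw [← sq_abs p]; nlinarith [sq_nonneg (|p| - 1), abs_nonneg p]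
  nlinarith [mul_le_mul_of_nonneg_right this h3.le]

lemma E2_bound (c k : ℝ) (hc : 0 < c) (hk : 0 < k) (y y' : ℝ) :
    |E2 c k y y'| ≤ 2 * c + 8 * k + (c / 2 + 2 * k) := by
  have h1 := sq_bound c k hc hk y y'
  have h2 := EE_le c k hc hk y y'
  have h3 := EE_pos c k y y'
  unfold E2
  set p := c * ((y + y') / 2) + 2 * k * (y - y')
  have h4 : (c / 2 + 2 * k) * EE c k y y' ≤ c / 2 + 2 * k :=
    mul_le_of_le_one_right (by positivity) h2
  have h5 : 0 ≤ p ^ 2 * EE c k y y' := by positivity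
  have h6 : 0 ≤ (c / 2 + 2 * k) * EE c k y y' := by positivity
  rw [sub_mul, abs_le]
  constructor <;> nlinarith

lemma bdd_int (u : SchwartzMap ℝ ℂ) (f : ℝ → ℝ) (hf : Continuous f) (C : ℝ)
    (hC : ∀ x, |f x| ≤ C) : Integrable (fun x => (f x : ℂ) * u x) :=
  u.integrable.bdd_mul (c := C) (by fun_prop)
    (Filter.Eventually.of_forall fun x => by simpa using hC x)

lemma int_deriv (u : SchwartzMap ℝ ℂ) (F F' : ℝ → ℝ → ℝ) (hF : ∀ y, Continuous (F y))
    (hF' : ∀ y, Continuous (F' y)) (C C' : ℝ) (hC : ∀ y x, |F y x| ≤ C)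
    (hC' : ∀ y x, |F' y x| ≤ C') (hd : ∀ y x, HasDerivAt (fun y => F y x) (F' y x) y) (y : ℝ) :
    HasDerivAt (fun y => ∫ x, (F y x : ℂ) * u x) (∫ x, (F' y x : ℂ) * u x) y := by
  refine (hasDerivAt_integral_of_dominated_loc_of_deriv_le (μ := volume)
    (F := fun y x => (F y x : ℂ) * u x) (F' := fun y x => (F' y x : ℂ) * u x)
    (bound := fun x => C' * ‖u x‖) (s := Set.univ) Filter.univ_mem
    (Filter.Eventually.of_forall fun z => (bdd_int u _ (hF z) C (hC z)).aestronglyMeasurable)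
    (bdd_int u _ (hF y) C (hC y)) (bdd_int u _ (hF' y) C' (hC' y)).aestronglyMeasurable
    (Filter.Eventually.of_forall fun x z _ => ?_) (u.integrable.norm.const_mul _)
    (Filter.Eventually.of_forall fun x z _ => (hd z x).ofReal_comp.mul_const _)).2
  rw [norm_mul]
  gcongr
  simpa using hC' z x

lemma split_exp (h c : ℝ) (y y' η : ℝ) :
    cexp (I * (((y - y') * η / h : ℝ) : ℂ)) *
      ((Real.exp (-c * (((y + y') / 2) ^ 2 + η ^ 2)) : ℝ) : ℂ) =
    (Real.exp (-c * ((y + y') / 2) ^ 2) : ℂ) *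
      cexp (-c * η ^ 2 + I * ((y - y') / h : ℝ) * η) := by
  rw [Complex.ofReal_exp, Complex.ofReal_exp, ← Complex.exp_add, ← Complex.exp_add]
  congr 1
  push_cast
  ring

lemma kernelT_eq (h c : ℝ) (hh : 0 < h) (hc : 0 < c) : ∃ B : ℂ, ∀ y y',
    gaussKernelT h c y y' = B * (EE c (1 / (4 * c * h ^ 2)) y y' : ℂ) := by
  refine ⟨((1 / (2 * Real.pi * h) : ℝ) : ℂ) * (π / c : ℂ) ^ (1 / 2 : ℂ), fun y y' => ?_⟩
  unfold gaussKernelT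
  simp_rw [split_exp]
  rw [integral_const_mul]
  have := integral_cexp_quadratic (b := -(c:ℂ)) (by simpa using hc) (I * ((y - y') / h : ℝ)) 0
  simp only [add_zero, neg_neg] at this
  have hc' : (c : ℂ) ≠ 0 := by exact_mod_cast hc.ne'
  have hh' : (h : ℂ) ≠ 0 := by exact_mod_cast hh.ne'
  have he : (Real.exp (-c * ((y + y') / 2) ^ 2) : ℂ) *
      cexp (0 - (I * ((y - y') / h : ℝ)) ^ 2 / (4 * -(c : ℂ))) =
      (EE c (1 / (4 * c * h ^ 2)) y y' : ℂ) := by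
    unfold EE
    rw [Complex.ofReal_exp, Complex.ofReal_exp, ← Complex.exp_add]
    congr 1
    push_cast
    rw [mul_pow, I_sq]
    field_simp
    ring
  rw [this, ← he]
  ring

lemma kernelS_eq (h c : ℝ) (hc : 0 < c) (y y' : ℝ) :
    gaussKernelS h c y y' = ((((y + y') / 2) ^ 2 + 1 / (2 * c) -
      ((y - y') / h) ^ 2 / (4 * c ^ 2) : ℝ) : ℂ) * gaussKernelT h c y y' := by
  unfold gaussKernelS gaussKernelT
  have i0 : Integrable (fun η : ℝ => cexp (-c * η ^ 2 + I * ((y - y') / h : ℝ) * η)) := by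
    simpa using aux_int c hc ((y - y') / h) 0
  have i2 := aux_int c hc ((y - y') / h) 2
  have e : ∀ η : ℝ, cexp (I * (((y - y') * η / h : ℝ) : ℂ)) *
      (((((y + y') / 2) ^ 2 + η ^ 2) * Real.exp (-c * (((y + y') / 2) ^ 2 + η ^ 2)) : ℝ) : ℂ) =
      (Real.exp (-c * ((y + y') / 2) ^ 2) : ℂ) *
        ((((y + y') / 2) ^ 2 : ℝ) * cexp (-c * η ^ 2 + I * ((y - y') / h : ℝ) * η) +
        (η : ℂ) ^ 2 * cexp (-c * η ^ 2 + I * ((y - y') / h : ℝ) * η)) := by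
    intro η
    rw [← add_mul, mul_left_comm, ← split_exp, Complex.ofReal_mul]
    push_cast
    ring
  simp_rw [e, split_exp]
  rw [integral_const_mul, integral_const_mul, integral_add (i0.const_mul _) i2,
    integral_const_mul, aux_moment c hc]
  push_cast
  ring

theorem gaussian_moyal_harmonic_oscillator_identity
    (h c : ℝ) (hh : 0 < h) (hc : 0 < c) (u : SchwartzMap ℝ ℂ) (y : ℝ) :
    -(h : ℂ) ^ 2 * deriv (deriv (applyT h c (⇑u))) y
        + (y : ℂ) ^ 2 * applyT h c (⇑u) y
      = (1 - (h : ℂ) ^ 2 * (c : ℂ) ^ 2) * applyS h c (⇑u) y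
          + (h : ℂ) ^ 2 * (c : ℂ) * applyT h c (⇑u) y := by
  obtain ⟨B, hB⟩ := kernelT_eq h c hh hc
  obtain ⟨k, hk⟩ : ∃ k, k = 1 / (4 * c * h ^ 2) := ⟨_, rfl⟩
  rw [← hk] at hB
  have hk0 : 0 < k := by rw [hk]; positivity
  have b0 : ∀ y x, |EE c k y x| ≤ 1 := fun y x => by
    rw [abs_of_pos (EE_pos _ _ _ _)]; exact EE_le c k hc hk0 y x
  have hT : applyT h c u = fun y => B * ∫ x, (EE c k y x : ℂ) * u x := by
    funext y
    simp only [applyT, hB, mul_assoc]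
    rw [integral_const_mul]
  have d1 : deriv (applyT h c u) = fun y => B * ∫ x, (E1 c k y x : ℂ) * u x := by
    funext y
    rw [hT]
    exact ((int_deriv u (EE c k) (E1 c k) (EE_cont c k) (E1_cont c k) _ _ b0
      (E1_bound c k hc hk0) (EE_deriv c k) y).const_mul B).deriv
  have d2 : deriv (deriv (applyT h c u)) y = B * ∫ x, (E2 c k y x : ℂ) * u x := by
    rw [d1]
    exact ((int_deriv u (E1 c k) (E2 c k) (E1_cont c k) (E2_cont c k) _ _ (E1_bound c k hc hk0)
      (E2_bound c k hc hk0) (E1_deriv c k) y).const_mul B).deriv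
  have I0 := bdd_int u _ (EE_cont c k y) _ (b0 y)
  have I2 := bdd_int u _ (E2_cont c k y) _ (E2_bound c k hc hk0 y)
  have hS : (1 - (h : ℂ) ^ 2 * (c : ℂ) ^ 2) * applyS h c u y =
      -(h : ℂ) ^ 2 * (B * ∫ x, (E2 c k y x : ℂ) * u x) +
      ((y : ℂ) ^ 2 - (h : ℂ) ^ 2 * c) * (B * ∫ x, (EE c k y x : ℂ) * u x) := by
    unfold applyS
    simp only [← mul_assoc]
    rw [← integral_const_mul, ← integral_const_mul, ← integral_const_mul,
      ← integral_add (I2.const_mul _) (I0.const_mul _)]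
    congr 1
    funext x
    rw [kernelS_eq h c hc, hB]
    have hr : (1 - h ^ 2 * c ^ 2) * (((y + x) / 2) ^ 2 + 1 / (2 * c) -
      ((y - x) / h) ^ 2 / (4 * c ^ 2)) = -h ^ 2 *
        ((c * ((y + x) / 2) + 2 * k * (y - x)) ^ 2 - (c / 2 + 2 * k)) + (y ^ 2 - h ^ 2 * c) := by
      rw [hk]
      field_simp
      ring
    have hr' := congrArg (fun t : ℝ => (t : ℂ)) hr
    simp only [E2]
    simp only [Complex.ofReal_mul, Complex.ofReal_add, Complex.ofReal_sub, Complex.ofReal_neg,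
      Complex.ofReal_pow, Complex.ofReal_one] at hr' ⊢
    linear_combination (B * (EE c k y x : ℂ) * u x) * hr'
  rw [d2, hS, hT]
  ring
end
end

section
/- For all h ∈ (0,1) and all k ∈ ℕ₀ one has (1−h)^k/(1+h)^{k+1} ≤ e^{−2kh}. Moreover, for every γ₀ > 0 there exists a constant C > 0, depending only on γ₀, such that for all h ∈ (0, 1/2] and all k ∈ ℕ₀ with kh ≤ γ₀, |(1−h)^k/(1+h)^{k+1} · e^{(2k+1)h} − 1| ≤ C h². -/
open Real

lemma aux_ratio (h : ℝ) (h0 : 0 < h) (h1 : h < 1) :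
    (1 - h) / (1 + h) ≤ Real.exp (-(2 * h)) := by
  have hs := Real.hasSum_log_sub_log_of_abs_lt_one (x := h) (by rw [abs_of_pos h0]; exact h1)
  have hl := sum_le_hasSum {0} (fun i _ => by positivity) hs
  simp at hl
  have h2 : (0 : ℝ) < 1 - h := by linarith
  have h3 : (0 : ℝ) < 1 + h := by linarith
  rw [← Real.log_le_iff_le_exp (by positivity), Real.log_div h2.ne' h3.ne']
  linarith

theorem gaussian_eigenvalue_asymptotics :
    (∀ h : ℝ, 0 < h → h < 1 → ∀ k : ℕ,
      (1 - h) ^ k / (1 + h) ^ (k + 1) ≤ Real.exp (-(2 * (k : ℝ) * h))) ∧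
    ∀ γ₀ : ℝ, 0 < γ₀ → ∃ C : ℝ, 0 < C ∧
      ∀ h : ℝ, 0 < h → h ≤ 1 / 2 → ∀ k : ℕ, (k : ℝ) * h ≤ γ₀ →
        |(1 - h) ^ k / (1 + h) ^ (k + 1) * Real.exp ((2 * (k : ℝ) + 1) * h) - 1|
          ≤ C * h ^ 2 := by
  constructor
  · intro h h0 h1 k
    have h2 : (0 : ℝ) < 1 - h := by linarith
    have h3 : (0 : ℝ) < 1 + h := by linarith
    have e : Real.exp (-(2 * (k : ℝ) * h)) = Real.exp (-(2 * h)) ^ k := by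
      rw [← Real.exp_nat_mul]; ring_nf
    have hp := pow_le_pow_left₀ (by positivity) (aux_ratio h h0 h1) k
    rw [e]
    refine le_trans ?_ hp
    rw [div_pow]
    gcongr
    · linarith
    · omega
  · intro γ hγ
    refine ⟨1 + 2 * γ, by positivity, ?_⟩
    intro h h0 h1 k hk
    have h2 : (0 : ℝ) < 1 - h := by linarith
    have h3 : (0 : ℝ) < 1 + h := by linarith
    obtain ⟨a, ha⟩ : ∃ a, a = (1 - h) / (1 + h) * Real.exp (2 * h) := ⟨_, rfl⟩
    obtain ⟨b, hb⟩ : ∃ b, b = Real.exp h / (1 + h) := ⟨_, rfl⟩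
    have e : (1 - h) ^ k / (1 + h) ^ (k + 1) * Real.exp ((2 * (k : ℝ) + 1) * h) = a ^ k * b := by
      have : Real.exp ((2 * (k : ℝ) + 1) * h) = Real.exp (2 * h) ^ k * Real.exp h := by
        rw [← Real.exp_nat_mul, ← Real.exp_add]; ring_nf
      rw [this, ha, hb, mul_pow, div_pow]
      field_simp
      ring
    have a0 : 0 ≤ a := by rw [ha]; positivity
    have a1 : a ≤ 1 := by
      have := mul_le_mul_of_nonneg_right (aux_ratio h h0 (by linarith)) (Real.exp_pos (2 * h)).le
      rw [← Real.exp_add] at this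
      simpa [ha] using this
    have a2 : 1 - 2 * h ^ 3 ≤ a := by
      have hq := Real.quadratic_le_exp_of_nonneg (x := 2 * h) (by positivity)
      have := mul_le_mul_of_nonneg_left hq h2.le
      rw [ha, div_mul_eq_mul_div, le_div_iff₀ h3]
      nlinarith [pow_pos h0 4]
    have b1 : 1 ≤ b := by
      rw [hb, le_div_iff₀ h3]; linarith [Real.add_one_le_exp h]
    have b2 : b ≤ 1 + h ^ 2 := by
      have := Real.abs_exp_sub_one_sub_id_le (x := h) (by rw [abs_of_pos h0]; linarith)
      have := (abs_le.1 this).2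
      rw [hb, div_le_iff₀ h3]
      nlinarith [pow_pos h0 3]
    have p1 : a ^ k ≤ 1 := pow_le_one₀ a0 a1
    have p2 : 1 - 2 * γ * h ^ 2 ≤ a ^ k := by
      have hB := one_add_mul_le_pow (a := a - 1) (by linarith) k
      rw [add_sub_cancel] at hB
      have q1 : (k : ℝ) * (-(2 * h ^ 3)) ≤ k * (a - 1) := by gcongr; linarith
      have q2 : (k : ℝ) * h * h ^ 2 ≤ γ * h ^ 2 := by gcongr
      nlinarith
    have p0 : 0 ≤ a ^ k := pow_nonneg a0 k
    rw [e, abs_le]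
    have := mul_pos hγ (pow_pos h0 2)
    constructor
    · nlinarith [mul_nonneg p0 (sub_nonneg.2 b1), pow_pos h0 2]
    · nlinarith [mul_nonneg (sub_nonneg.2 p1) (by linarith : 0 ≤ b)]
end
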